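/- arXiv:1905.10965 — 5 statements merged into one kernel-verified Lean document; each statement's English description precedes it below -/
import Mathlib

section
/- For reals a, b, c, d, e, f with a > 0, c > 0, 4ac − b² > 0, d > 0, f > 0, 4df − e² > 0, the integral A(a,b,c;d,e,f) = ∫_{−∞}^{∞} ln(dx² + ex + f)/(ax² + bx + c) dx equals (2π/√(4ac−b²))·(ln(2af − be + 2cd + √(4ac−b²)·√(4df−e²)) − ln(2a)). -/
open MeasureTheory Real

lemma aux_avg (K : ℝ) (β : ℂ) (hβ : ‖β‖ < 1) :
    ∫ θ in Set.Ioo (-π) π, (K + 2 * Real.log ‖circleMap 0 1 θ - β‖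
      - 2 * Real.log ‖circleMap 0 1 θ - (-1)‖) = 2 * π * K := by
  have h1 := circleIntegrable_log_norm_sub_const (a := β) (c := 0) 1
  have h2 := circleIntegrable_log_norm_sub_const (a := -1) (c := 0) 1
  have key : circleAverage (fun z : ℂ => K + (2 : ℝ) • Real.log ‖z - β‖
      - (2 : ℝ) • Real.log ‖z - (-1)‖) 0 1 = K := by
    have e1 : CircleIntegrable (fun z : ℂ => (2 : ℝ) • Real.log ‖z - β‖) 0 1 :=
      h1.const_fun_smul
    have e2 : CircleIntegrable (fun z : ℂ => (2 : ℝ) • Real.log ‖z - (-1)‖) 0 1 :=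
      h2.const_fun_smul
    have e0 : CircleIntegrable (fun z : ℂ => K) 0 1 := circleIntegrable_const _ _ _
    have e3 : CircleIntegrable (fun z : ℂ => K + (2 : ℝ) • Real.log ‖z - β‖) 0 1 := e0.add e1
    rw [circleAverage_fun_sub e3 e2, circleAverage_fun_add e0 e1,
      circleAverage_fun_smul, circleAverage_fun_smul, circleAverage_const,
      circleAverage_log_norm_sub_const₀ hβ, circleAverage_log_norm_sub_const₁ (by simp)]
    simp
  rw [circleAverage_eq_integral_add (-π)] at key
  rw [intervalIntegral.integral_comp_add_right (fun θ => (fun z : ℂ => K + (2 : ℝ) • Real.log ‖z - β‖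
      - (2 : ℝ) • Real.log ‖z - (-1)‖) (circleMap 0 1 θ)), zero_add,
      show 2 * π + -π = π by ring, intervalIntegral.integral_of_le (by linarith [pi_pos]),
      integral_Ioc_eq_integral_Ioo] at key
  simp only [smul_eq_mul] at key
  have hp := pi_pos
  rw [inv_mul_eq_iff_eq_mul₀ (by positivity)] at key
  exact key

lemma aux_tan (g : ℝ → ℝ) :
    ∫ u : ℝ, g u / (1 + u ^ 2) = ∫ θ in Set.Ioo (-π) π, (1 / 2) * g (Real.tan (θ / 2)) := by
  have himg : (fun θ : ℝ => Real.tan (θ / 2)) '' Set.Ioo (-π) π = Set.univ := by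
    rw [Set.eq_univ_iff_forall]
    intro u
    refine ⟨2 * Real.arctan u, ⟨?_, ?_⟩, ?_⟩
    · linarith [Real.neg_pi_div_two_lt_arctan u]
    · linarith [Real.arctan_lt_pi_div_two u]
    · simp [Real.tan_arctan]
  have hcos : ∀ θ ∈ Set.Ioo (-π) π, 0 < Real.cos (θ / 2) := by
    intro θ hθ
    exact Real.cos_pos_of_mem_Ioo ⟨by linarith [hθ.1], by linarith [hθ.2]⟩
  have hder : ∀ θ ∈ Set.Ioo (-π) π, HasDerivWithinAt (fun θ : ℝ => Real.tan (θ / 2))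
      (1 / Real.cos (θ / 2) ^ 2 * (1 / 2)) (Set.Ioo (-π) π) θ := by
    intro θ hθ
    have := (Real.hasDerivAt_tan (hcos θ hθ).ne').comp θ ((hasDerivAt_id θ).div_const 2)
    exact this.hasDerivWithinAt
  have hinj : Set.InjOn (fun θ : ℝ => Real.tan (θ / 2)) (Set.Ioo (-π) π) := by
    intro x hx y hy hxy
    have := Real.injOn_tan (show x / 2 ∈ _ from ⟨by linarith [hx.1], by linarith [hx.2]⟩)
      (show y / 2 ∈ _ from ⟨by linarith [hy.1], by linarith [hy.2]⟩) hxy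
    linarith
  rw [← setIntegral_univ, ← himg,
    integral_image_eq_integral_abs_deriv_smul measurableSet_Ioo hder hinj]
  refine setIntegral_congr_fun measurableSet_Ioo ?_
  intro θ hθ
  have hc := hcos θ hθ
  simp only [smul_eq_mul]
  rw [abs_of_pos (by positivity), Real.tan_eq_sin_div_cos]
  have h1 : 1 + (Real.sin (θ / 2) / Real.cos (θ / 2)) ^ 2 = 1 / Real.cos (θ / 2) ^ 2 := by
    field_simp
    linarith [Real.sin_sq_add_cos_sq (θ / 2)]
  rw [h1]
  field_simp

lemma aux_main (D E F : ℝ) (hD : 0 < D) (h : 0 < 4 * D * F - E ^ 2) :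
    ∫ u : ℝ, Real.log (D * u ^ 2 + E * u + F) / (1 + u ^ 2)
      = π * Real.log (D + F + Real.sqrt (4 * D * F - E ^ 2)) := by
  set S := Real.sqrt (4 * D * F - E ^ 2) with hS
  have hSpos : 0 < S := Real.sqrt_pos.2 h
  have hS2 : S ^ 2 = 4 * D * F - E ^ 2 := Real.sq_sqrt h.le
  have hF : 0 < F := by
    by_contra hF
    nlinarith [sq_nonneg E]
  set p : ℝ := -E / (2 * D) with hp
  set q : ℝ := S / (2 * D) with hq
  have hqpos : 0 < q := by positivity
  have hEp : E = -2 * D * p := by rw [hp]; field_simp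
  have hFp : F = D * (p ^ 2 + q ^ 2) := by
    rw [hp, hq]; field_simp; nlinarith
  have hSq : S = 2 * D * q := by rw [hq]; field_simp
  set α : ℂ := ⟨p, q⟩ with hα
  have hden : Complex.normSq (α + Complex.I) = p ^ 2 + (q + 1) ^ 2 := by
    simp [Complex.normSq_apply, hα]; ring
  have hnum : Complex.normSq (α - Complex.I) = p ^ 2 + (q - 1) ^ 2 := by
    simp [Complex.normSq_apply, hα]; ring
  have hne : α + Complex.I ≠ 0 := by
    intro h0
    rw [h0] at hden
    simp at hden
    nlinarith [sq_nonneg p]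
  have hN : 0 < p ^ 2 + (q + 1) ^ 2 := by positivity
  set β : ℂ := -(α - Complex.I) / (α + Complex.I) with hβ
  have hβ1 : ‖β‖ < 1 := by
    have : ‖β‖ ^ 2 < 1 := by
      rw [← Complex.normSq_eq_norm_sq, hβ, Complex.normSq_div, Complex.normSq_neg, hden, hnum,
        div_lt_one hN]
      nlinarith
    nlinarith [norm_nonneg β]
  rw [aux_tan]
  have hK : D + F + S = D * (p ^ 2 + (q + 1) ^ 2) := by rw [hFp, hSq]; ring
  have : Set.EqOn (fun θ : ℝ => (1 / 2) * Real.log (D * Real.tan (θ / 2) ^ 2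
      + E * Real.tan (θ / 2) + F)) (fun θ => (1 / 2) * (Real.log (D + F + S) +
      2 * Real.log ‖circleMap 0 1 θ - β‖ - 2 * Real.log ‖circleMap 0 1 θ - (-1)‖))
      (Set.Ioo (-π) π) := by
    intro θ hθ
    have hc : 0 < Real.cos (θ / 2) :=
      Real.cos_pos_of_mem_Ioo ⟨by linarith [hθ.1], by linarith [hθ.2]⟩
    simp only
    congr 1
    rw [Real.tan_eq_sin_div_cos]
    have hcs := Real.sin_sq_add_cos_sq (θ / 2)
    have hw : circleMap 0 1 θ = ⟨Real.cos (θ / 2) ^ 2 - Real.sin (θ / 2) ^ 2,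
        2 * Real.sin (θ / 2) * Real.cos (θ / 2)⟩ := by
      have e1 : Real.cos θ = Real.cos (θ / 2) ^ 2 - Real.sin (θ / 2) ^ 2 := by
        rw [← Real.cos_two_mul']; congr 1; ring
      have e2 : Real.sin θ = 2 * Real.sin (θ / 2) * Real.cos (θ / 2) := by
        rw [← Real.sin_two_mul]; congr 1; ring
      rw [← e1, ← e2]
      apply Complex.ext <;> simp [circleMap, Complex.exp_ofReal_mul_I_re, Complex.exp_ofReal_mul_I_im]
    rw [hw]
    set s := Real.sin (θ / 2)
    set c := Real.cos (θ / 2)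
    set w : ℂ := ⟨c ^ 2 - s ^ 2, 2 * s * c⟩ with hwdef
    have n1 : ‖w - (-1)‖ ^ 2 = 4 * c ^ 2 := by
      rw [← Complex.normSq_eq_norm_sq]
      simp [Complex.normSq_apply, hwdef]
      have : s ^ 2 = 1 - c ^ 2 := by linarith
      ring_nf
      rw [show s ^ 4 = (s ^ 2) ^ 2 by ring, this]
      ring
    have n2 : ‖w - β‖ ^ 2 * (p ^ 2 + (q + 1) ^ 2) = 4 * ((p * c - s) ^ 2 + q ^ 2 * c ^ 2) := by
      rw [← Complex.normSq_eq_norm_sq, ← hden, ← Complex.normSq_mul]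
      have : (w - β) * (α + Complex.I) = ⟨c, s⟩ * ⟨2 * (p * c - s), 2 * (q * c)⟩ := by
        rw [hβ, sub_mul, div_mul_cancel₀ _ hne]
        have hs2 : s ^ 2 = 1 - c ^ 2 := by linarith
        apply Complex.ext
        · simp [hwdef, hα]; linear_combination (-p) * hcs
        · simp [hwdef, hα]; linear_combination (1 - q) * hcs
      rw [this, Complex.normSq_mul]
      simp only [Complex.normSq_mk]
      linear_combination (4 * ((p * c - s) ^ 2 + q ^ 2 * c ^ 2)) * hcs
    have pos2 : 0 < (p * c - s) ^ 2 + q ^ 2 * c ^ 2 := by positivity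
    have m1 : ‖w - (-1)‖ ≠ 0 := by
      intro h0; rw [h0] at n1; nlinarith [mul_pos hc hc]
    have m2 : ‖w - β‖ ≠ 0 := by
      intro h0; rw [h0] at n2; nlinarith
    have hKne : D + F + S ≠ 0 := by positivity
    have l1 : ∀ x : ℝ, 2 * Real.log x = Real.log (x ^ 2) := by
      intro x; rw [Real.log_pow]; norm_num
    rw [l1, l1, ← Real.log_mul hKne (pow_ne_zero _ m2), ← Real.log_div
      (mul_ne_zero hKne (pow_ne_zero _ m2)) (pow_ne_zero _ m1), n1]
    congr 1
    rw [hK, show D * (p ^ 2 + (q + 1) ^ 2) * ‖w - β‖ ^ 2 =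
      D * (‖w - β‖ ^ 2 * (p ^ 2 + (q + 1) ^ 2)) by ring, n2, hEp, hFp]
    field_simp
    ring
  rw [setIntegral_congr_fun measurableSet_Ioo this, integral_const_mul, aux_avg _ _ hβ1]
  ring

theorem stmt_1 (a b c d e f : ℝ) (ha : 0 < a) (hc : 0 < c) (habc : 0 < 4 * a * c - b ^ 2)
    (hd : 0 < d) (hf : 0 < f) (hdef : 0 < 4 * d * f - e ^ 2) :
    ∫ x : ℝ, Real.log (d * x ^ 2 + e * x + f) / (a * x ^ 2 + b * x + c) =
      (2 * π / Real.sqrt (4 * a * c - b ^ 2)) *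
        (Real.log (2 * a * f - b * e + 2 * c * d +
            Real.sqrt (4 * a * c - b ^ 2) * Real.sqrt (4 * d * f - e ^ 2)) -
          Real.log (2 * a)) := by
  set R := Real.sqrt (4 * a * c - b ^ 2) with hR
  set T := Real.sqrt (4 * d * f - e ^ 2) with hT
  have hRpos : 0 < R := Real.sqrt_pos.2 habc
  have hTpos : 0 < T := Real.sqrt_pos.2 hdef
  have hR2 : R ^ 2 = 4 * a * c - b ^ 2 := Real.sq_sqrt habc.le
  have hT2 : T ^ 2 = 4 * d * f - e ^ 2 := Real.sq_sqrt hdef.le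
  set m : ℝ := -b / (2 * a) with hm
  set r : ℝ := R / (2 * a) with hr
  have hrpos : 0 < r := by positivity
  have hb : b = -2 * a * m := by rw [hm]; field_simp
  have hcc : c = a * (m ^ 2 + r ^ 2) := by
    rw [hm, hr]; field_simp; nlinarith
  have hRr : R = 2 * a * r := by rw [hr]; field_simp
  have hdisc : 4 * (d * r ^ 2) * (d * m ^ 2 + e * m + f) - ((2 * d * m + e) * r) ^ 2
      = (r * T) ^ 2 := by rw [mul_pow r T, hT2]; ring
  have main := aux_main (d * r ^ 2) ((2 * d * m + e) * r) (d * m ^ 2 + e * m + f)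
    (by positivity) (by rw [hdisc]; positivity)
  rw [hdisc, Real.sqrt_sq (by positivity)] at main
  set G : ℝ → ℝ := fun x => Real.log (d * x ^ 2 + e * x + f) / (a * x ^ 2 + b * x + c) with hG
  have hsub : ∫ u : ℝ, G (r * u + m) = r⁻¹ * ∫ x, G x := by
    have h1 := Measure.integral_comp_mul_left (fun x => G (x + m)) r
    rw [h1, integral_add_right_eq_self, abs_of_pos (by positivity), smul_eq_mul]
  have hG2 : ∀ u, G (r * u + m) = (1 / (a * r ^ 2)) * (Real.log (d * r ^ 2 * u ^ 2
      + (2 * d * m + e) * r * u + (d * m ^ 2 + e * m + f)) / (1 + u ^ 2)) := by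
    intro u
    have e1 : d * (r * u + m) ^ 2 + e * (r * u + m) + f = d * r ^ 2 * u ^ 2
      + (2 * d * m + e) * r * u + (d * m ^ 2 + e * m + f) := by ring
    have e2 : a * (r * u + m) ^ 2 + b * (r * u + m) + c = a * r ^ 2 * (1 + u ^ 2) := by
      rw [hcc, hb]; ring
    simp only [hG]
    rw [e1, e2]
    have : 0 < 1 + u ^ 2 := by positivity
    field_simp
  simp_rw [hG2] at hsub
  rw [integral_const_mul, main] at hsub
  have hX : 2 * a * f - b * e + 2 * c * d + R * T
      = (2 * a) * (d * r ^ 2 + (d * m ^ 2 + e * m + f) + r * T) := by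
    rw [hRr, hcc, hb]; ring
  have hpos : 0 < d * r ^ 2 + (d * m ^ 2 + e * m + f) + r * T := by
    have : 0 < d * m ^ 2 + e * m + f := by nlinarith [sq_nonneg (2 * d * m + e)]
    positivity
  rw [hX, Real.log_mul (by positivity) hpos.ne', hRr]
  have : ∫ x, G x = r * (1 / (a * r ^ 2) *
      (π * Real.log (d * r ^ 2 + (d * m ^ 2 + e * m + f) + r * T))) := by
    rw [hsub]; field_simp
  rw [this]
  field_simp
  ring
end

section
/- The cross-entropy between two Cauchy densities, h^×(p_{l₁,s₁} : p_{l₂,s₂}) = −∫ p_{l₁,s₁}(x) ln p_{l₂,s₂}(x) dx, equals ln(π((s₁+s₂)² + (l₁−l₂)²)/s₂). -/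
open MeasureTheory Real

noncomputable def cauchyPdf (l s x : ℝ) : ℝ := s / (π * (s ^ 2 + (x - l) ^ 2))

lemma aux_periodic (a : ℂ) :
    Function.Periodic (fun θ : ℝ => Real.log ‖circleMap 0 1 θ - a‖) (2 * π) := fun x => by
  simp [periodic_circleMap 0 1 x]

lemma aux_integrable (a : ℂ) :
    IntervalIntegrable (fun φ : ℝ => Real.log ‖circleMap 0 1 (2 * φ) - a‖) volume
      (-(π / 2)) (π / 2) := by
  have h0 : CircleIntegrable (fun z : ℂ => Real.log ‖z - a‖) 0 1 :=
    circleIntegrable_log_norm_sub_const 1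
  have h1 := (aux_periodic a).intervalIntegrable (t := 0) (by positivity)
    (by rw [zero_add]; exact h0) (-π) π
  have h2 := h1.comp_mul_left (c := 2)
  convert h2 using 1 <;> ring

lemma aux_integral (a : ℂ) (ha : ‖a‖ ≤ 1) :
    ∫ φ in (-(π / 2))..(π / 2), Real.log ‖circleMap 0 1 (2 * φ) - a‖ = 0 := by
  have h0 : circleAverage (fun z : ℂ => Real.log ‖z - a‖) 0 1 = 0 := by
    have := circleAverage_log_norm_sub_const_of_mem_closedBall (a := a) (c := 0) (R := 1)
      (by simpa using ha)
    simpa using this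
  rw [circleAverage_def, smul_eq_mul] at h0
  have h1 : ∫ θ in (0:ℝ)..2 * π, Real.log ‖circleMap 0 1 θ - a‖ = 0 := by
    rcases mul_eq_zero.1 h0 with h | h
    · exact absurd h (by positivity)
    · exact h
  have h2 := (aux_periodic a).intervalIntegral_add_eq (-π) 0
  rw [zero_add, h1] at h2
  rw [intervalIntegral.integral_comp_mul_left (fun θ => Real.log ‖circleMap 0 1 θ - a‖) two_ne_zero]
  rw [show (2:ℝ) * -(π / 2) = -π by ring, show (2:ℝ) * (π / 2) = -π + 2 * π by ring, h2]
  simp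

lemma aux_pointwise (d s₁ s₂ : ℝ) (hs₁ : 0 < s₁) (hs₂ : 0 < s₂) (φ : ℝ) (hc : 0 < Real.cos φ) :
    Real.log (s₂ ^ 2 + (s₁ * Real.tan φ + d) ^ 2) =
      Real.log ((s₁ + s₂) ^ 2 + d ^ 2)
      + 2 * Real.log ‖circleMap 0 1 (2 * φ) - (-(⟨d, s₁ - s₂⟩ / ⟨d, -(s₁ + s₂)⟩) : ℂ)‖
      - 2 * Real.log ‖circleMap 0 1 (2 * φ) - (-1 : ℂ)‖ := by
  set B : ℂ := ⟨d, -(s₁ + s₂)⟩ with hB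
  set A : ℂ := ⟨d, s₁ - s₂⟩ with hA
  have hB2 : ‖B‖ ^ 2 = (s₁ + s₂) ^ 2 + d ^ 2 := by
    rw [← Complex.normSq_eq_norm_sq, Complex.normSq_apply]; simp [hB]; ring
  have hBpos : 0 < (s₁ + s₂) ^ 2 + d ^ 2 := by positivity
  have hB0 : B ≠ 0 := by
    intro h; rw [h] at hB2; simp at hB2; linarith
  have hw : circleMap 0 1 (2 * φ) = (⟨2 * Real.cos φ ^ 2 - 1, 2 * Real.sin φ * Real.cos φ⟩ : ℂ) := by
    rw [← Real.cos_two_mul, ← Real.sin_two_mul]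
    apply Complex.ext
    · simp [circleMap, Complex.exp_re]
    · simp [circleMap, Complex.exp_im]
  set w := circleMap 0 1 (2 * φ) with hwdef
  have h1 : ‖w - (-1)‖ ^ 2 = 4 * Real.cos φ ^ 2 := by
    rw [← Complex.normSq_eq_norm_sq, Complex.normSq_apply, hw]
    simp
    linear_combination 4 * Real.cos φ ^ 2 * Real.sin_sq_add_cos_sq φ
  have h2 : ‖B * w + A‖ ^ 2 =
      4 * ((s₁ * Real.sin φ + d * Real.cos φ) ^ 2 + s₂ ^ 2 * Real.cos φ ^ 2) := by
    have e : B * w + A = ⟨2 * Real.cos φ * (d * Real.cos φ + (s₁ + s₂) * Real.sin φ),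
        2 * (d * Real.sin φ * Real.cos φ + s₁ * Real.sin φ ^ 2 - s₂ * Real.cos φ ^ 2)⟩ := by
      rw [hw]
      apply Complex.ext
      · simp [hB, hA]; ring
      · simp [hB, hA]
        linear_combination (-2 * s₁) * Real.sin_sq_add_cos_sq φ
    rw [← Complex.normSq_eq_norm_sq, Complex.normSq_apply, e]
    simp only
    linear_combination 4 * ((s₁ * Real.sin φ + d * Real.cos φ) ^ 2 + s₂ ^ 2 * Real.cos φ ^ 2) *
      Real.sin_sq_add_cos_sq φ
  have h3 : ‖B * w + A‖ ^ 2 = ‖B‖ ^ 2 * ‖w - (-(A / B))‖ ^ 2 := by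
    rw [← mul_pow, ← norm_mul]
    congr 2
    field_simp
    ring
  have h4 : (s₂ ^ 2 + (s₁ * Real.tan φ + d) ^ 2) * ‖w - (-1)‖ ^ 2 =
      ((s₁ + s₂) ^ 2 + d ^ 2) * ‖w - (-(A / B))‖ ^ 2 := by
    rw [← hB2, ← h3, h2, h1, Real.tan_eq_sin_div_cos]
    field_simp
    ring
  have hL : 0 < s₂ ^ 2 + (s₁ * Real.tan φ + d) ^ 2 := by positivity
  have hD : 0 < ‖w - (-1)‖ ^ 2 := by rw [h1]; positivity
  have hN : ‖w - (-(A / B))‖ ^ 2 ≠ 0 := by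
    intro h
    rw [h, mul_zero] at h4
    exact absurd h4 (by positivity)
  have h5 := congrArg Real.log h4
  rw [Real.log_mul hL.ne' hD.ne', Real.log_mul hBpos.ne' hN, Real.log_pow, Real.log_pow] at h5
  push_cast at h5
  linarith

theorem stmt_3 (l₁ l₂ s₁ s₂ : ℝ) (hs₁ : 0 < s₁) (hs₂ : 0 < s₂) :
    -∫ x : ℝ, cauchyPdf l₁ s₁ x * Real.log (cauchyPdf l₂ s₂ x) =
      Real.log (π * ((s₁ + s₂) ^ 2 + (l₁ - l₂) ^ 2) / s₂) := by
  have hBpos : 0 < (s₁ + s₂) ^ 2 + (l₁ - l₂) ^ 2 := by positivity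
  set a : ℂ := -(⟨l₁ - l₂, s₁ - s₂⟩ / ⟨l₁ - l₂, -(s₁ + s₂)⟩) with ha
  have han : ‖a‖ ≤ 1 := by
    rw [ha, norm_neg, norm_div]
    apply div_le_one_of_le₀ _ (norm_nonneg _)
    rw [← sq_le_sq₀ (norm_nonneg _) (norm_nonneg _), ← Complex.normSq_eq_norm_sq,
      ← Complex.normSq_eq_norm_sq, Complex.normSq_apply, Complex.normSq_apply]
    simp only
    nlinarith [mul_pos hs₁ hs₂]
  have himg : (fun φ => l₁ + s₁ * Real.tan φ) '' Set.Ioo (-(π / 2)) (π / 2) = Set.univ := by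
    ext x
    simp only [Set.mem_image, Set.mem_univ, iff_true]
    refine ⟨Real.arctan ((x - l₁) / s₁), Real.arctan_mem_Ioo _, ?_⟩
    rw [Real.tan_arctan]
    field_simp
    ring
  have hinj : Set.InjOn (fun φ => l₁ + s₁ * Real.tan φ) (Set.Ioo (-(π / 2)) (π / 2)) := by
    intro x hx y hy hxy
    apply Real.injOn_tan hx hy
    simpa [hs₁.ne'] using hxy
  have hcov := integral_image_eq_integral_abs_deriv_smul (measurableSet_Ioo)
    (f := fun φ => l₁ + s₁ * Real.tan φ) (f' := fun φ => s₁ * (1 / Real.cos φ ^ 2))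
    (fun φ hφ => (((Real.hasDerivAt_tan_of_mem_Ioo hφ).const_mul s₁).const_add l₁).hasDerivWithinAt)
    hinj (fun x => cauchyPdf l₁ s₁ x * Real.log (cauchyPdf l₂ s₂ x))
  rw [himg, setIntegral_univ] at hcov
  rw [hcov]
  have hcongr : ∫ φ in Set.Ioo (-(π / 2)) (π / 2), |s₁ * (1 / Real.cos φ ^ 2)| •
      (cauchyPdf l₁ s₁ (l₁ + s₁ * Real.tan φ) *
        Real.log (cauchyPdf l₂ s₂ (l₁ + s₁ * Real.tan φ))) =
      ∫ φ in Set.Ioo (-(π / 2)) (π / 2), π⁻¹ *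
        (-Real.log (π * ((s₁ + s₂) ^ 2 + (l₁ - l₂) ^ 2) / s₂)
          - 2 * Real.log ‖circleMap 0 1 (2 * φ) - a‖
          + 2 * Real.log ‖circleMap 0 1 (2 * φ) - (-1 : ℂ)‖) := by
    apply setIntegral_congr_fun measurableSet_Ioo
    intro φ hφ
    have hc : 0 < Real.cos φ := Real.cos_pos_of_mem_Ioo hφ
    have hp := aux_pointwise (l₁ - l₂) s₁ s₂ hs₁ hs₂ φ hc
    rw [← ha] at hp
    have hq : 0 < s₂ ^ 2 + (s₁ * Real.tan φ + (l₁ - l₂)) ^ 2 := by positivity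
    have e1 : |s₁ * (1 / Real.cos φ ^ 2)| * cauchyPdf l₁ s₁ (l₁ + s₁ * Real.tan φ) = π⁻¹ := by
      rw [abs_of_pos (by positivity), cauchyPdf, add_sub_cancel_left, Real.tan_eq_sin_div_cos]
      have : s₁ ^ 2 + (s₁ * (Real.sin φ / Real.cos φ)) ^ 2 = s₁ ^ 2 / Real.cos φ ^ 2 := by
        field_simp
        linear_combination Real.sin_sq_add_cos_sq φ
      rw [this]
      field_simp
    have e2 : Real.log (cauchyPdf l₂ s₂ (l₁ + s₁ * Real.tan φ)) =
        Real.log s₂ - (Real.log π + Real.log (s₂ ^ 2 + (s₁ * Real.tan φ + (l₁ - l₂)) ^ 2)) := by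
      rw [cauchyPdf, show l₁ + s₁ * Real.tan φ - l₂ = s₁ * Real.tan φ + (l₁ - l₂) by ring,
        Real.log_div hs₂.ne' (by positivity), Real.log_mul pi_pos.ne' hq.ne']
    simp only [smul_eq_mul]
    rw [← mul_assoc, e1, e2, hp, Real.log_div (by positivity) hs₂.ne',
      Real.log_mul pi_pos.ne' hBpos.ne']
    ring
  rw [hcongr, ← integral_Ioc_eq_integral_Ioo, ← intervalIntegral.integral_of_le (by linarith [pi_pos]),
    intervalIntegral.integral_const_mul, intervalIntegral.integral_add
      ((intervalIntegrable_const).sub ((aux_integrable a).const_mul 2))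
      ((aux_integrable (-1)).const_mul 2),
    intervalIntegral.integral_sub intervalIntegrable_const ((aux_integrable a).const_mul 2),
    intervalIntegral.integral_const_mul, intervalIntegral.integral_const_mul,
    aux_integral a han, aux_integral (-1) (by simp), intervalIntegral.integral_const, smul_eq_mul]
  field_simp
  ring
end

section
/- The Kullback–Leibler divergence between Cauchy densities p_{l₁,s₁} and p_{l₂,s₂}, defined as ∫ p_{l₁,s₁}(x) ln(p_{l₁,s₁}(x)/p_{l₂,s₂}(x)) dx, equals ln(((s₁+s₂)² + (l₁−l₂)²)/(4s₁s₂)). -/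
open MeasureTheory Real

lemma avg_aux (f : ℂ → ℝ) :
    ∫ φ in Set.Ioo (-(π / 2)) (π / 2), π⁻¹ * f (circleMap 0 1 (2 * φ)) = circleAverage f 0 1 := by
  rw [circleAverage_eq_integral_add (-π), ← integral_Ioc_eq_integral_Ioo,
    ← intervalIntegral.integral_of_le (by linarith [pi_pos]),
    intervalIntegral.integral_const_mul,
    intervalIntegral.integral_comp_mul_left (fun θ => f (circleMap 0 1 θ)) two_ne_zero,
    intervalIntegral.integral_comp_add_right (fun θ => f (circleMap 0 1 θ))]
  have h1 : (2 : ℝ) * -(π / 2) = 0 + -π := by ring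
  have h2 : (2 : ℝ) * (π / 2) = 2 * π + -π := by ring
  rw [h1, h2, smul_eq_mul, smul_eq_mul, mul_inv]
  ring

lemma norm_aux (d s₁ s₂ c φ : ℝ) :
    ‖(c : ℂ) * ((⟨d, s₂ - s₁⟩ : ℂ) * circleMap 0 1 (2 * φ) + ⟨d, s₁ + s₂⟩)‖ ^ 2
      = c ^ 2 * (4 * (s₂ ^ 2 * cos φ ^ 2 + (d * cos φ + s₁ * sin φ) ^ 2)) := by
  have hw : circleMap 0 1 (2 * φ) = (⟨cos (2 * φ), sin (2 * φ)⟩ : ℂ) := by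
    apply Complex.ext
    · simp [circleMap, Complex.exp_re]
    · simp [circleMap, Complex.exp_im]
  rw [hw, norm_mul, mul_pow, Complex.norm_real, Real.norm_eq_abs, sq_abs, Complex.sq_norm,
    Complex.normSq_apply]
  simp only [Complex.add_re, Complex.add_im, Complex.mul_re, Complex.mul_im]
  rw [cos_two_mul, sin_two_mul]
  have h := sin_sq_add_cos_sq φ
  have h4 : sin φ ^ 2 = 1 - cos φ ^ 2 := by linarith
  congr 1
  ring_nf
  simp only [h4]
  ring

theorem stmt_5 (l₁ l₂ s₁ s₂ : ℝ) (hs₁ : 0 < s₁) (hs₂ : 0 < s₂) :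
    ∫ x : ℝ, cauchyPdf l₁ s₁ x * Real.log (cauchyPdf l₁ s₁ x / cauchyPdf l₂ s₂ x) =
      Real.log (((s₁ + s₂) ^ 2 + (l₁ - l₂) ^ 2) / (4 * s₁ * s₂)) := by
  set d := l₁ - l₂ with hd
  set c : ℝ := (√(4 * s₁ * s₂))⁻¹ with hc
  have hcpos : 0 < c := by positivity
  have hc2 : c ^ 2 = (4 * s₁ * s₂)⁻¹ := by
    rw [hc, inv_pow, Real.sq_sqrt (by positivity)]
  set g : ℂ → ℂ := fun z => (c : ℂ) * ((⟨d, s₂ - s₁⟩ : ℂ) * z + ⟨d, s₁ + s₂⟩) with hg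
  have himg : (fun φ => l₁ + s₁ * tan φ) '' Set.Ioo (-(π / 2)) (π / 2) = Set.univ := by
    ext x
    simp only [Set.mem_univ, iff_true]
    refine ⟨arctan ((x - l₁) / s₁), arctan_mem_Ioo _, ?_⟩
    simp only [tan_arctan]
    field_simp
    ring
  have key := integral_image_eq_integral_abs_deriv_smul (s := Set.Ioo (-(π / 2)) (π / 2))
    (f := fun φ => l₁ + s₁ * tan φ) (f' := fun φ => s₁ * (1 / cos φ ^ 2)) measurableSet_Ioo
    (fun x hx => (((hasDerivAt_tan_of_mem_Ioo hx).const_mul s₁).const_add l₁).hasDerivWithinAt)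
    (fun x hx y hy hxy => injOn_tan hx hy (by
      simpa [hs₁.ne'] using hxy))
    (fun x => cauchyPdf l₁ s₁ x * Real.log (cauchyPdf l₁ s₁ x / cauchyPdf l₂ s₂ x))
  rw [himg, Measure.restrict_univ] at key
  rw [key]
  have hcongr : ∀ φ ∈ Set.Ioo (-(π / 2)) (π / 2),
      |s₁ * (1 / cos φ ^ 2)| • (cauchyPdf l₁ s₁ (l₁ + s₁ * tan φ) *
        Real.log (cauchyPdf l₁ s₁ (l₁ + s₁ * tan φ) / cauchyPdf l₂ s₂ (l₁ + s₁ * tan φ)))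
      = π⁻¹ * (2 * Real.log ‖g (circleMap 0 1 (2 * φ))‖) := by
    intro φ hφ
    have hcos := cos_pos_of_mem_Ioo hφ
    have hp1 : cauchyPdf l₁ s₁ (l₁ + s₁ * tan φ) = cos φ ^ 2 / (π * s₁) := by
      unfold cauchyPdf
      have : s₁ ^ 2 + (l₁ + s₁ * tan φ - l₁) ^ 2 = s₁ ^ 2 / cos φ ^ 2 := by
        rw [tan_eq_sin_div_cos]
        field_simp
        linear_combination s₁ ^ 2 * sin_sq_add_cos_sq φ
      rw [this]
      field_simp
    have hp2 : cauchyPdf l₂ s₂ (l₁ + s₁ * tan φ)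
        = s₂ * cos φ ^ 2 / (π * (s₂ ^ 2 * cos φ ^ 2 + (d * cos φ + s₁ * sin φ) ^ 2)) := by
      unfold cauchyPdf
      have : s₂ ^ 2 * cos φ ^ 2 + (d * cos φ + s₁ * sin φ) ^ 2
          = cos φ ^ 2 * (s₂ ^ 2 + (l₁ + s₁ * tan φ - l₂) ^ 2) := by
        rw [tan_eq_sin_div_cos]
        field_simp
        rw [hd]
        ring
      rw [this]
      have : 0 < s₂ ^ 2 + (l₁ + s₁ * tan φ - l₂) ^ 2 := by positivity
      field_simp
    have hlog : 2 * Real.log ‖g (circleMap 0 1 (2 * φ))‖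
        = Real.log (‖g (circleMap 0 1 (2 * φ))‖ ^ 2) := by
      rw [Real.log_pow]; norm_num
    rw [hlog, hg, norm_aux, hc2, hp1, hp2, abs_of_pos (by positivity), smul_eq_mul, ← mul_assoc]
    have hQ : 0 < s₂ ^ 2 * cos φ ^ 2 + (d * cos φ + s₁ * sin φ) ^ 2 := by positivity
    congr 1
    · field_simp
    · congr 1
      field_simp
  rw [setIntegral_congr_fun measurableSet_Ioo hcongr,
    avg_aux (fun z => 2 * Real.log ‖g z‖)]
  have h2 : circleAverage (fun z => 2 * Real.log ‖g z‖) 0 1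
      = 2 * circleAverage (fun z => Real.log ‖g z‖) 0 1 := by
    simp only [circleAverage, smul_eq_mul, intervalIntegral.integral_const_mul]
    ring
  rw [h2, AnalyticOnNhd.circleAverage_log_norm_of_ne_zero]
  · have : 2 * Real.log ‖g 0‖ = Real.log (‖g 0‖ ^ 2) := by
      rw [Real.log_pow]; norm_num
    rw [this, hg]
    congr 1
    simp only [mul_zero, zero_add]
    rw [norm_mul, mul_pow, Complex.norm_real, Real.norm_eq_abs, sq_abs, Complex.sq_norm,
      Complex.normSq_apply, hc2]
    field_simp
    ring
  · intro z _
    rw [hg]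
    fun_prop
  · intro u hu h0
    have hu1 : ‖u‖ ≤ 1 := by simpa using hu
    rw [hg] at h0
    have h1 : (⟨d, s₂ - s₁⟩ : ℂ) * u + ⟨d, s₁ + s₂⟩ = 0 := by
      have hcc : (c : ℂ) ≠ 0 := by exact_mod_cast hcpos.ne'
      simpa [hcc] using h0
    have h3 : ‖(⟨d, s₁ + s₂⟩ : ℂ)‖ = ‖(⟨d, s₂ - s₁⟩ : ℂ)‖ * ‖u‖ := by
      rw [← norm_mul, eq_neg_of_add_eq_zero_left h1, norm_neg]
    have h4 : ‖(⟨d, s₁ + s₂⟩ : ℂ)‖ ≤ ‖(⟨d, s₂ - s₁⟩ : ℂ)‖ := by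
      rw [h3]
      exact mul_le_of_le_one_right (norm_nonneg _) hu1
    have h5 : ‖(⟨d, s₁ + s₂⟩ : ℂ)‖ ^ 2 ≤ ‖(⟨d, s₂ - s₁⟩ : ℂ)‖ ^ 2 := by gcongr
    rw [Complex.sq_norm, Complex.sq_norm, Complex.normSq_apply, Complex.normSq_apply] at h5
    simp only at h5
    nlinarith [mul_pos hs₁ hs₂]
end

section
/- The Kullback–Leibler divergence between any two Cauchy densities is finite: for all l₁, l₂ ∈ ℝ and s₁, s₂ > 0, the function x ↦ p_{l₁,s₁}(x)·ln(p_{l₁,s₁}(x)/p_{l₂,s₂}(x)) is Lebesgue integrable on ℝ. -/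
open MeasureTheory Real

theorem cauchyPdf_pos' (l s x : ℝ) (hs : 0 < s) : 0 < cauchyPdf l s x := by
  unfold cauchyPdf
  have := Real.pi_pos
  positivity

theorem cauchyPdf_ratio_le (l₁ l₂ s₁ s₂ : ℝ) (hs₁ : 0 < s₁) (hs₂ : 0 < s₂) :
    ∃ C : ℝ, 0 < C ∧ ∀ x, cauchyPdf l₁ s₁ x / cauchyPdf l₂ s₂ x ≤ C := by
  refine ⟨s₁ / s₂ * ((s₂ ^ 2 + 2 * (l₁ - l₂) ^ 2) / s₁ ^ 2 + 2), by positivity, fun x => ?_⟩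
  have hpi := Real.pi_pos
  have h1 : 0 < s₁ ^ 2 + (x - l₁) ^ 2 := by positivity
  have h2 : 0 < s₂ ^ 2 + (x - l₂) ^ 2 := by positivity
  have e : cauchyPdf l₁ s₁ x / cauchyPdf l₂ s₂ x
      = s₁ / s₂ * ((s₂ ^ 2 + (x - l₂) ^ 2) / (s₁ ^ 2 + (x - l₁) ^ 2)) := by
    unfold cauchyPdf
    field_simp
  rw [e]
  apply mul_le_mul_of_nonneg_left _ (by positivity)
  rw [div_le_iff₀ h1]
  set A := (s₂ ^ 2 + 2 * (l₁ - l₂) ^ 2) / s₁ ^ 2 with hA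
  have hA0 : 0 ≤ A := by positivity
  have hA1 : A * s₁ ^ 2 = s₂ ^ 2 + 2 * (l₁ - l₂) ^ 2 := by
    rw [hA]; field_simp
  have h3 : 0 ≤ A * (x - l₁) ^ 2 := by positivity
  nlinarith [sq_nonneg ((x - l₁) - (l₁ - l₂)), sq_nonneg s₁]

theorem cauchyPdf_integrable (l s : ℝ) (hs : 0 < s) : Integrable (cauchyPdf l s) := by
  have h := ((integrable_inv_one_add_sq.comp_mul_left' (inv_ne_zero hs.ne')).comp_sub_right
    l).const_mul (1 / (π * s))
  refine h.congr (Filter.Eventually.of_forall fun x => ?_)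
  have hpi := Real.pi_pos
  have h1 : 0 < s ^ 2 + (x - l) ^ 2 := by positivity
  simp only [cauchyPdf]
  field_simp

theorem stmt_7 (l₁ l₂ s₁ s₂ : ℝ) (hs₁ : 0 < s₁) (hs₂ : 0 < s₂) :
    Integrable (fun x : ℝ =>
      cauchyPdf l₁ s₁ x * Real.log (cauchyPdf l₁ s₁ x / cauchyPdf l₂ s₂ x)) := by
  obtain ⟨C, hC, hC'⟩ := cauchyPdf_ratio_le l₁ l₂ s₁ s₂ hs₁ hs₂
  obtain ⟨D, hD, hD'⟩ := cauchyPdf_ratio_le l₂ l₁ s₂ s₁ hs₂ hs₁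
  refine (cauchyPdf_integrable l₁ s₁ hs₁).mul_bdd (c := C + D) ?_
    (Filter.Eventually.of_forall fun x => ?_)
  · apply Measurable.aestronglyMeasurable
    unfold cauchyPdf
    fun_prop
  · have p1 := cauchyPdf_pos' l₁ s₁ x hs₁
    have p2 := cauchyPdf_pos' l₂ s₂ x hs₂
    have a := Real.log_le_sub_one_of_pos (div_pos p1 p2)
    have b := Real.log_le_sub_one_of_pos (div_pos p2 p1)
    have e : Real.log (cauchyPdf l₂ s₂ x / cauchyPdf l₁ s₁ x)
        = - Real.log (cauchyPdf l₁ s₁ x / cauchyPdf l₂ s₂ x) := by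
      rw [← Real.log_inv, inv_div]
    have := hC' x
    have := hD' x
    rw [Real.norm_eq_abs, abs_le]
    constructor <;> linarith
end

section
/- For l ∈ ℝ, s > 0, l' ∈ ℝ, s' > 0, the integral ∫_{−∞}^{∞} (s/(π(s² + (x−l)²)))·ln(s'² + (x−l')²) dx equals ln((s + s')² + (l − l')²). -/
open MeasureTheory Real

lemma aux_avg_s19 (L : ℝ) (a : ℂ) (ha : ‖a‖ ≤ 1) :
    Real.circleAverage (fun z : ℂ => (L + (2:ℝ) • Real.log ‖z - a‖) - (2:ℝ) • Real.log ‖z - (-1)‖) 0 1 = L := by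
  have h1 : ∀ b : ℂ, CircleIntegrable (fun z : ℂ => Real.log ‖z - b‖) 0 1 := fun b =>
    circleIntegrable_log_norm_sub_const 1
  have h2 : ∀ b : ℂ, CircleIntegrable (fun z : ℂ => (2:ℝ) • Real.log ‖z - b‖) 0 1 := fun b =>
    (h1 b).const_smul
  have h0 : CircleIntegrable (fun _ : ℂ => L) 0 1 := circleIntegrable_const L 0 1
  have h3 : ∀ b : ℂ, ‖b‖ ≤ 1 →
      Real.circleAverage (fun z : ℂ => (2:ℝ) • Real.log ‖z - b‖) 0 1 = 0 := by
    intro b hb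
    rw [Real.circleAverage_fun_smul,
      circleAverage_log_norm_sub_const_of_mem_closedBall (by simpa using hb)]
    simp
  have h4 : CircleIntegrable (fun z : ℂ => L + (2:ℝ) • Real.log ‖z - a‖) 0 1 := h0.add (h2 a)
  rw [Real.circleAverage_fun_sub h4 (h2 _), Real.circleAverage_fun_add h0 (h2 a),
    h3 a ha, h3 (-1) (by simp), Real.circleAverage_const]
  simp

lemma aux_sub (l s : ℝ) (hs : 0 < s) (g : ℝ → ℝ) :
    ∫ x : ℝ, (s / (π * (s ^ 2 + (x - l) ^ 2))) * g x =
      ∫ θ in Set.Ioo (-π) π, (2 * π)⁻¹ * g (l + s * Real.tan (θ / 2)) := by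
  have hc : ∀ θ ∈ Set.Ioo (-π) π, 0 < Real.cos (θ / 2) := fun θ hθ =>
    Real.cos_pos_of_mem_Ioo ⟨by linarith [hθ.1], by linarith [hθ.2]⟩
  have him : (fun θ : ℝ => l + s * Real.tan (θ / 2)) '' Set.Ioo (-π) π = Set.univ := by
    refine Set.eq_univ_of_forall fun x => ⟨2 * Real.arctan ((x - l) / s), ⟨?_, ?_⟩, ?_⟩
    · linarith [Real.neg_pi_div_two_lt_arctan ((x - l) / s)]
    · linarith [Real.arctan_lt_pi_div_two ((x - l) / s)]
    · have : 2 * Real.arctan ((x - l) / s) / 2 = Real.arctan ((x - l) / s) := by ring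
      simp only [this, Real.tan_arctan]
      field_simp
      ring
  have hinj : Set.InjOn (fun θ : ℝ => l + s * Real.tan (θ / 2)) (Set.Ioo (-π) π) := by
    intro x hx y hy hxy
    have h1 : Real.tan (x / 2) = Real.tan (y / 2) := by
      have : s * Real.tan (x / 2) = s * Real.tan (y / 2) := by
        simpa using hxy
      exact mul_left_cancel₀ hs.ne' this
    have := Real.injOn_tan (x₁ := x / 2) (x₂ := y / 2)
      ⟨by linarith [hx.1], by linarith [hx.2]⟩ ⟨by linarith [hy.1], by linarith [hy.2]⟩ h1
    linarith
  have hd : ∀ θ ∈ Set.Ioo (-π) π, HasDerivWithinAt (fun θ : ℝ => l + s * Real.tan (θ / 2))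
      (s * (1 / Real.cos (θ / 2) ^ 2 * (1 / 2))) (Set.Ioo (-π) π) θ := by
    intro θ hθ
    have h1 := (Real.hasDerivAt_tan (hc θ hθ).ne').comp θ ((hasDerivAt_id θ).div_const 2)
    exact ((h1.const_mul s).const_add l).hasDerivWithinAt
  rw [← setIntegral_univ, ← him,
    integral_image_eq_integral_abs_deriv_smul measurableSet_Ioo hd hinj]
  refine setIntegral_congr_fun measurableSet_Ioo fun θ hθ => ?_
  have h := hc θ hθ
  have hsc := Real.sin_sq_add_cos_sq (θ / 2)
  simp only [smul_eq_mul]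
  rw [abs_of_pos (by positivity), ← mul_assoc]
  congr 1
  have e : s ^ 2 + (l + s * Real.tan (θ / 2) - l) ^ 2 = s ^ 2 / Real.cos (θ / 2) ^ 2 := by
    rw [Real.tan_eq_sin_div_cos]
    field_simp
    linear_combination s ^ 2 * hsc
  rw [e]
  field_simp

theorem stmt_19 (l l' s s' : ℝ) (hs : 0 < s) (hs' : 0 < s') :
    ∫ x : ℝ, (s / (π * (s ^ 2 + (x - l) ^ 2))) * Real.log (s' ^ 2 + (x - l') ^ 2) =
      Real.log ((s + s') ^ 2 + (l - l') ^ 2) := by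
  set P : ℝ := (s + s') ^ 2 + (l - l') ^ 2 with hP
  have hPpos : 0 < P := by positivity
  set A : ℝ := ((l - l') ^ 2 + s' ^ 2 - s ^ 2) / P with hA
  set B : ℝ := 2 * (l - l') * s / P with hB
  have hPA : P * A = (l - l') ^ 2 + s' ^ 2 - s ^ 2 := by rw [hA]; field_simp
  have hPB : P * B = 2 * (l - l') * s := by rw [hB]; field_simp
  have hAB : P * (A ^ 2 + B ^ 2) = (l - l') ^ 2 + (s' - s) ^ 2 := by
    have : P * (P * (A ^ 2 + B ^ 2)) = P * ((l - l') ^ 2 + (s' - s) ^ 2) := by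
      have : P * (P * (A ^ 2 + B ^ 2)) = (P * A) ^ 2 + (P * B) ^ 2 := by ring
      rw [this, hPA, hPB, hP]; ring
    exact mul_left_cancel₀ hPpos.ne' this
  have ha : ‖(⟨-A, -B⟩ : ℂ)‖ ≤ 1 := by
    have h1 : A ^ 2 + B ^ 2 ≤ 1 := by
      have : P * (A ^ 2 + B ^ 2) ≤ P * 1 := by rw [hAB, hP]; nlinarith [mul_pos hs hs']
      exact le_of_mul_le_mul_left this hPpos
    rw [← sq_le_one_iff₀ (norm_nonneg _), ← Complex.normSq_eq_norm_sq, Complex.normSq_mk]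
    linarith
  have key := aux_avg_s19 (Real.log P) ⟨-A, -B⟩ ha
  rw [aux_sub l s hs]
  rw [Real.circleAverage_def] at key
  set F : ℂ → ℝ := (fun z : ℂ => (Real.log P + (2:ℝ) • Real.log ‖z - ⟨-A, -B⟩‖)
    - (2:ℝ) • Real.log ‖z - (-1)‖) with hF
  have hper : Function.Periodic (fun θ : ℝ => F (circleMap 0 1 θ)) (2 * π) := fun x => by
    simp only [periodic_circleMap 0 1 x]
  have h4 := hper.intervalIntegral_add_eq 0 (-π)
  rw [zero_add, show -π + 2 * π = π by ring] at h4
  rw [h4, intervalIntegral.integral_of_le (by linarith [Real.pi_pos]),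
    integral_Ioc_eq_integral_Ioo, smul_eq_mul] at key
  rw [integral_const_mul, ← key]
  congr 1
  refine setIntegral_congr_fun measurableSet_Ioo fun θ hθ => ?_
  have hc : 0 < Real.cos (θ / 2) :=
    Real.cos_pos_of_mem_Ioo ⟨by linarith [hθ.1], by linarith [hθ.2]⟩
  have hsc := Real.sin_sq_add_cos_sq (θ / 2)
  have hcos : Real.cos θ = 2 * Real.cos (θ / 2) ^ 2 - 1 := by
    rw [← Real.cos_two_mul]; ring_nf
  have hsin : Real.sin θ = 2 * Real.sin (θ / 2) * Real.cos (θ / 2) := by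
    rw [← Real.sin_two_mul]; ring_nf
  have hz : circleMap 0 1 θ = ⟨Real.cos θ, Real.sin θ⟩ := by
    apply Complex.ext <;> simp [circleMap, Complex.exp_ofReal_mul_I_re, Complex.exp_ofReal_mul_I_im]
  have h2log : ∀ w : ℂ, (2:ℝ) • Real.log ‖w‖ = Real.log (Complex.normSq w) := fun w => by
    rw [Complex.normSq_eq_norm_sq, Real.log_pow]; simp
  have hn1 : Complex.normSq (circleMap 0 1 θ - (-1)) = 4 * Real.cos (θ / 2) ^ 2 := by
    rw [hz, Complex.normSq_apply]
    simp only [Complex.sub_re, Complex.sub_im, Complex.neg_re, Complex.neg_im, Complex.one_re,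
      Complex.one_im, hcos, hsin]
    linear_combination 4 * Real.cos (θ / 2) ^ 2 * hsc
  have hn2 : P * Complex.normSq (circleMap 0 1 θ - ⟨-A, -B⟩) =
      (s' ^ 2 + (l + s * Real.tan (θ / 2) - l') ^ 2) * (4 * Real.cos (θ / 2) ^ 2) := by
    have e1 : P * Complex.normSq (circleMap 0 1 θ - ⟨-A, -B⟩) =
        P * (Real.sin θ ^ 2 + Real.cos θ ^ 2) + P * (A ^ 2 + B ^ 2) + 2 * (P * A) * Real.cos θ
          + 2 * (P * B) * Real.sin θ := by
      rw [hz, Complex.normSq_apply]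
      simp only [Complex.sub_re, Complex.sub_im]
      ring
    rw [e1, hAB, hPA, hPB, Real.sin_sq_add_cos_sq, hcos, hsin, hP, Real.tan_eq_sin_div_cos]
    field_simp
    linear_combination (-4 * s ^ 2) * hsc
  have hpos : 0 < s' ^ 2 + (l + s * Real.tan (θ / 2) - l') ^ 2 := by positivity
  have hn : Complex.normSq (circleMap 0 1 θ - ⟨-A, -B⟩) ≠ 0 := by
    intro h0
    rw [h0, mul_zero] at hn2
    have : 0 < (s' ^ 2 + (l + s * Real.tan (θ / 2) - l') ^ 2) * (4 * Real.cos (θ / 2) ^ 2) := by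
      positivity
    linarith
  simp only [hF]
  rw [h2log, h2log, hn1, ← Real.log_mul hPpos.ne' hn, hn2,
    Real.log_mul hpos.ne' (by positivity)]
  ring
end
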